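/- Let H and H' be complex Hilbert spaces, let (s_n)_{n ≥ 1} and (s'_n)_{n ≥ 1} be families of bounded operators on H and H' respectively with s_m^* s_n = δ_{mn}·1 and s'_m{}^* s'_n = δ_{mn}·1 for all m, n ≥ 1, and let Ω ∈ H and Ω' ∈ H' be unit vectors, cyclic for (s_n) and (s'_n) respectively, with s_1(s_2 Ω) = Ω and s'_1(s'_2 Ω') = Ω'. Then there exists a unitary operator U : H → H' such that U Ω = Ω' and U s_n = s'_n U for every n ≥ 1. (Any two representations in the class P∞(12) are unitarily equivalent.) -/

import Mathlib

/-!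
For words `u`, `v`, the inner product of `s_u x` and `s_v y` vanishes unless one word is a prefix of
the other, and common prefixes cancel. Hence the Gram matrix of the vectors `s_w Ω` is determined by
its first row `⟪Ω, s_w Ω⟫`, and the relation `s_J Ω = Ω` determines that row: it lets one strip `J`
off the front of `w`, and, `J` being nonperiodic, forces the entry to vanish once `w` is nonempty
and does not start with `J`. By cyclicity the vectors `s_w Ω` span a dense subspace, so two
representations with the same `J` are identified by the isometry matching these vectors.
-/

open scoped InnerProductSpace

section InnerProductSpace

variable {𝕜 α E F : Type*} [RCLike 𝕜]
  [NormedAddCommGroup E] [InnerProductSpace 𝕜 E] [NormedAddCommGroup F] [InnerProductSpace 𝕜 F]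

theorem norm_linearCombination_eq_of_inner_eq {x : α → E} {y : α → F}
    (h : ∀ a b, ⟪x a, x b⟫_𝕜 = ⟪y a, y b⟫_𝕜) (f : α →₀ 𝕜) :
    ‖Finsupp.linearCombination 𝕜 x f‖ = ‖Finsupp.linearCombination 𝕜 y f‖ := by
  simp only [norm_eq_sqrt_re_inner (𝕜 := 𝕜), Finsupp.linearCombination_apply, Finsupp.sum_inner,
    Finsupp.inner_sum, inner_smul_left, inner_smul_right, h]

theorem exists_linearIsometryEquiv_of_inner_eq [CompleteSpace E] [CompleteSpace F]
    {x : α → E} {y : α → F} (h : ∀ a b, ⟪x a, x b⟫_𝕜 = ⟪y a, y b⟫_𝕜)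
    (hx : Dense (Submodule.span 𝕜 (Set.range x) : Set E))
    (hy : Dense (Submodule.span 𝕜 (Set.range y) : Set F)) :
    ∃ U : E ≃ₗᵢ[𝕜] F, ∀ a, U (x a) = y a := by
  rw [← Finsupp.range_linearCombination] at hx hy
  have hnorm (f : α →₀ 𝕜) := (norm_linearCombination_eq_of_inner_eq h f).symm
  refine ⟨(LinearEquiv.refl 𝕜 (α →₀ 𝕜)).extendOfIsometry _ _ hx hy hnorm, fun a ↦ ?_⟩
  simpa using LinearEquiv.extendOfIsometry_eq (.refl 𝕜 (α →₀ 𝕜)) _ _ hx hy hnorm (.single a 1)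

end InnerProductSpace

/-- A nonempty word that differs from all its proper rotations; equivalently, one that is not a
proper power of a shorter word. -/
structure IsNonperiodic {ι : Type*} (J : List ι) : Prop where
  ne_nil : J ≠ []
  rotation_ne : ∀ {u v : List ι}, J = u ++ v → u ≠ [] → v ≠ [] → v ++ u ≠ J

theorem isNonperiodic_pair {ι : Type*} {i j : ι} (h : i ≠ j) : IsNonperiodic [i, j] where
  ne_nil := List.cons_ne_nil _ _
  rotation_ne {u v} huv hu hv := by
    obtain ⟨rfl, rfl⟩ : u = [i] ∧ v = [j] := by
      rcases u with _ | ⟨a, _ | ⟨b, u⟩⟩ <;> simp_all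
    simp [h.symm]

section Words

variable {𝕜 ι H : Type*} [RCLike 𝕜] [NormedAddCommGroup H] [InnerProductSpace 𝕜 H]

/-- The operator `s_w = s_{w₁} ⋯ s_{wₖ}` of a word `w = [w₁, …, wₖ]`. -/
def wordOp (s : ι → H →L[𝕜] H) (w : List ι) : H →L[𝕜] H :=
  (w.map s).prod

@[simp]
theorem wordOp_nil_apply (s : ι → H →L[𝕜] H) (x : H) : wordOp s [] x = x := rfl

@[simp]
theorem wordOp_cons_apply (s : ι → H →L[𝕜] H) (i : ι) (w : List ι) (x : H) :
    wordOp s (i :: w) x = s i (wordOp s w x) := by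
  simp [wordOp]

theorem wordOp_append_apply (s : ι → H →L[𝕜] H) (u v : List ι) (x : H) :
    wordOp s (u ++ v) x = wordOp s u (wordOp s v x) := by
  simp [wordOp]

/-- The linear span of the vectors `s_w Ω`, over all words `w`. -/
def wordSpan (s : ι → H →L[𝕜] H) (Ω : H) : Submodule 𝕜 H :=
  Submodule.span 𝕜 (Set.range fun w ↦ wordOp s w Ω)

theorem wordOp_apply_mem_wordSpan (s : ι → H →L[𝕜] H) (Ω : H) (w : List ι) :
    wordOp s w Ω ∈ wordSpan s Ω :=
  Submodule.subset_span ⟨w, rfl⟩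

theorem apply_mem_topologicalClosure_wordSpan {s : ι → H →L[𝕜] H} {Ω : H} {T : H →L[𝕜] H}
    (hT : ∀ w, T (wordOp s w Ω) ∈ wordSpan s Ω) :
    ∀ v ∈ (wordSpan s Ω).topologicalClosure, T v ∈ (wordSpan s Ω).topologicalClosure := by
  have hle : wordSpan s Ω ≤ (wordSpan s Ω).comap (T : H →ₗ[𝕜] H) :=
    Submodule.span_le.2 (Set.range_subset_iff.2 hT)
  exact fun v hv ↦ map_mem_closure T.continuous hv hle

theorem intertwines_of_map_wordOp {H' : Type*} [NormedAddCommGroup H'] [InnerProductSpace 𝕜 H']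
    {s : ι → H →L[𝕜] H} {s' : ι → H' →L[𝕜] H'} {Ω : H} {Ω' : H'} (U : H →L[𝕜] H')
    (hdense : Dense (wordSpan s Ω : Set H)) (hU : ∀ w, U (wordOp s w Ω) = wordOp s' w Ω')
    (i : ι) (v : H) :
    U (s i v) = s' i (U v) := by
  have hcomp : U ∘L s i = s' i ∘L U := by
    refine ContinuousLinearMap.ext_on hdense ?_
    rintro _ ⟨w, rfl⟩
    simpa [hU] using hU (i :: w)
  exact DFunLike.congr_fun hcomp v

end Words

section Cuntz

variable {𝕜 ι H H' : Type*} [RCLike 𝕜]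
  [NormedAddCommGroup H] [InnerProductSpace 𝕜 H] [CompleteSpace H]
  [NormedAddCommGroup H'] [InnerProductSpace 𝕜 H'] [CompleteSpace H']
  {s : ι → H →L[𝕜] H} {s' : ι → H' →L[𝕜] H'} {Ω : H} {Ω' : H'} {J : List ι}

/-- A family of isometries with pairwise orthogonal ranges: the relations of the Cuntz algebra `O∞`
when `ι` is countably infinite. For finite `ι` the relation `∑ i, s i (s i)^* = 1` of the Cuntz
algebra is not imposed. -/
structure IsCuntzFamily (s : ι → H →L[𝕜] H) : Prop where
  adjoint_comp_self : ∀ i, (s i).adjoint ∘L s i = 1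
  adjoint_comp_of_ne : ∀ {i j}, i ≠ j → (s i).adjoint ∘L s j = 0

/-- `Ω` is cyclic for `s`: it lies in no proper closed subspace invariant under every `s i` and
every `(s i)^*`. -/
def IsCyclicVector (s : ι → H →L[𝕜] H) (Ω : H) : Prop :=
  ∀ K : Submodule 𝕜 H, IsClosed (K : Set H) → Ω ∈ K → (∀ i, ∀ v ∈ K, s i v ∈ K) →
    (∀ i, ∀ v ∈ K, (s i).adjoint v ∈ K) → K = ⊤

namespace IsCuntzFamily

theorem adjoint_apply_apply_self (hs : IsCuntzFamily s) (i : ι) (x : H) :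
    (s i).adjoint (s i x) = x :=
  DFunLike.congr_fun (hs.adjoint_comp_self i) x

theorem adjoint_apply_apply_of_ne (hs : IsCuntzFamily s) {i j : ι} (hij : i ≠ j) (x : H) :
    (s i).adjoint (s j x) = 0 :=
  DFunLike.congr_fun (hs.adjoint_comp_of_ne hij) x

theorem inner_apply_apply_self (hs : IsCuntzFamily s) (i : ι) (x y : H) :
    ⟪s i x, s i y⟫_𝕜 = ⟪x, y⟫_𝕜 := by
  rw [← ContinuousLinearMap.adjoint_inner_right, hs.adjoint_apply_apply_self]

theorem inner_apply_apply_of_ne (hs : IsCuntzFamily s) {i j : ι} (hij : i ≠ j) (x y : H) :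
    ⟪s i x, s j y⟫_𝕜 = 0 := by
  rw [← ContinuousLinearMap.adjoint_inner_right, hs.adjoint_apply_apply_of_ne hij, inner_zero_right]

theorem inner_wordOp_wordOp_self (hs : IsCuntzFamily s) (w : List ι) (x y : H) :
    ⟪wordOp s w x, wordOp s w y⟫_𝕜 = ⟪x, y⟫_𝕜 := by
  induction w with
  | nil => rfl
  | cons i w ih => rw [wordOp_cons_apply, wordOp_cons_apply, hs.inner_apply_apply_self, ih]

theorem inner_wordOp_wordOp_of_not_prefix (hs : IsCuntzFamily s) {u v : List ι}
    (huv : ¬u <+: v) (hvu : ¬v <+: u) (x y : H) : ⟪wordOp s u x, wordOp s v y⟫_𝕜 = 0 := by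
  induction u generalizing v with
  | nil => exact absurd List.nil_prefix huv
  | cons i u ih =>
    cases v with
    | nil => exact absurd List.nil_prefix hvu
    | cons j v =>
      rw [wordOp_cons_apply, wordOp_cons_apply]
      rcases eq_or_ne i j with rfl | hij
      · rw [hs.inner_apply_apply_self]
        exact ih (by simpa using huv) (by simpa using hvu)
      · exact hs.inner_apply_apply_of_ne hij _ _

theorem inner_wordOp_wordOp_eq (hs : IsCuntzFamily s) (hs' : IsCuntzFamily s')
    (h : ∀ w, ⟪Ω, wordOp s w Ω⟫_𝕜 = ⟪Ω', wordOp s' w Ω'⟫_𝕜) (u v : List ι) :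
    ⟪wordOp s u Ω, wordOp s v Ω⟫_𝕜 = ⟪wordOp s' u Ω', wordOp s' v Ω'⟫_𝕜 := by
  by_cases huv : u <+: v
  · obtain ⟨w, rfl⟩ := huv
    simp only [wordOp_append_apply, hs.inner_wordOp_wordOp_self, hs'.inner_wordOp_wordOp_self, h]
  by_cases hvu : v <+: u
  · obtain ⟨w, rfl⟩ := hvu
    rw [← inner_conj_symm, ← inner_conj_symm (wordOp s' _ Ω')]
    simp only [wordOp_append_apply, hs.inner_wordOp_wordOp_self, hs'.inner_wordOp_wordOp_self, h]
  · rw [hs.inner_wordOp_wordOp_of_not_prefix huv hvu, hs'.inner_wordOp_wordOp_of_not_prefix huv hvu]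

theorem inner_wordOp_append_of_fixed (hs : IsCuntzFamily s) (hΩ : wordOp s J Ω = Ω)
    (w : List ι) : ⟪Ω, wordOp s (J ++ w) Ω⟫_𝕜 = ⟪Ω, wordOp s w Ω⟫_𝕜 := by
  simpa only [wordOp_append_apply, hΩ] using hs.inner_wordOp_wordOp_self J Ω (wordOp s w Ω)

theorem inner_wordOp_eq_zero_of_fixed (hs : IsCuntzFamily s) (hJ : IsNonperiodic J)
    (hΩ : wordOp s J Ω = Ω) {w : List ι} (hw : w ≠ []) (hJw : ¬J <+: w) :
    ⟪Ω, wordOp s w Ω⟫_𝕜 = 0 := by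
  by_cases hwJ : w <+: J
  · obtain ⟨u, hu⟩ := hwJ
    have hu_ne : u ≠ [] := by
      rintro rfl
      exact hJw (by simp [← hu])
    have hrot : u ++ w ≠ w ++ u := hu ▸ hJ.rotation_ne hu.symm hw hu_ne
    have hlen : (u ++ w).length = (w ++ u).length := by simp [add_comm]
    have hΩ_split : wordOp s w (wordOp s u Ω) = Ω := by rw [← wordOp_append_apply, hu, hΩ]
    calc ⟪Ω, wordOp s w Ω⟫_𝕜
      _ = ⟪wordOp s w (wordOp s u Ω), wordOp s w Ω⟫_𝕜 := by rw [hΩ_split]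
      _ = ⟪wordOp s u Ω, Ω⟫_𝕜 := hs.inner_wordOp_wordOp_self _ _ _
      _ = ⟪wordOp s (u ++ w) (wordOp s u Ω), wordOp s (w ++ u) Ω⟫_𝕜 := by
        simp only [wordOp_append_apply, hΩ_split]
      _ = 0 := hs.inner_wordOp_wordOp_of_not_prefix (fun h ↦ hrot (h.eq_of_length hlen))
        (fun h ↦ hrot (h.eq_of_length hlen.symm).symm) _ _
  · simpa only [hΩ] using hs.inner_wordOp_wordOp_of_not_prefix hJw hwJ Ω Ω

theorem inner_wordOp_eq_of_fixed (hs : IsCuntzFamily s) (hs' : IsCuntzFamily s')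
    (hJ : IsNonperiodic J) (hΩ : wordOp s J Ω = Ω) (hΩ' : wordOp s' J Ω' = Ω')
    (hnorm : ‖Ω‖ = ‖Ω'‖) (w : List ι) :
    ⟪Ω, wordOp s w Ω⟫_𝕜 = ⟪Ω', wordOp s' w Ω'⟫_𝕜 := by
  induction hn : w.length using Nat.strong_induction_on generalizing w with
  | _ n ih =>
    by_cases hJw : J <+: w
    · obtain ⟨v, rfl⟩ := hJw
      have hv : v.length < n := by
        simpa [← hn] using List.length_pos_iff.2 hJ.ne_nil
      rw [hs.inner_wordOp_append_of_fixed hΩ, hs'.inner_wordOp_append_of_fixed hΩ', ih _ hv v rfl]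
    rcases eq_or_ne w [] with rfl | hw
    · simp only [wordOp_nil_apply, inner_self_eq_norm_sq_to_K, hnorm]
    · rw [hs.inner_wordOp_eq_zero_of_fixed hJ hΩ hw hJw,
        hs'.inner_wordOp_eq_zero_of_fixed hJ hΩ' hw hJw]

theorem adjoint_wordOp_apply_mem_wordSpan (hs : IsCuntzFamily s) (hJ : J ≠ [])
    (hΩ : wordOp s J Ω = Ω) (i : ι) (w : List ι) :
    (s i).adjoint (wordOp s w Ω) ∈ wordSpan s Ω := by
  -- Replacing `w` by `w ++ J` makes the word nonempty without changing its vector.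
  obtain ⟨j, v, hv⟩ := List.exists_cons_of_ne_nil (List.append_ne_nil_of_right_ne_nil w hJ)
  rw [← hΩ, ← wordOp_append_apply, hv, wordOp_cons_apply, hΩ]
  rcases eq_or_ne i j with rfl | hij
  · rw [hs.adjoint_apply_apply_self]
    exact wordOp_apply_mem_wordSpan s Ω v
  · rw [hs.adjoint_apply_apply_of_ne hij]
    exact zero_mem _

theorem dense_wordSpan (hs : IsCuntzFamily s) (hcyc : IsCyclicVector s Ω) (hJ : J ≠ [])
    (hΩ : wordOp s J Ω = Ω) : Dense (wordSpan s Ω : Set H) := by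
  have hs_mem (i : ι) (w : List ι) : s i (wordOp s w Ω) ∈ wordSpan s Ω := by
    simpa only [wordOp_cons_apply] using wordOp_apply_mem_wordSpan s Ω (i :: w)
  have hΩ_mem : Ω ∈ wordSpan s Ω := wordOp_apply_mem_wordSpan s Ω []
  exact Submodule.dense_iff_topologicalClosure_eq_top.2 <|
    hcyc _ (Submodule.isClosed_topologicalClosure _) (Submodule.le_topologicalClosure _ hΩ_mem)
      (fun i ↦ apply_mem_topologicalClosure_wordSpan (hs_mem i))
      fun i ↦ apply_mem_topologicalClosure_wordSpan (hs.adjoint_wordOp_apply_mem_wordSpan hJ hΩ i)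

end IsCuntzFamily

theorem isCuntzFamily_pnat {s : ℕ → H →L[𝕜] H}
    (h : ∀ m n, 1 ≤ m → 1 ≤ n → (s m).adjoint ∘L s n = if m = n then 1 else 0) :
    IsCuntzFamily fun n : ℕ+ ↦ s n where
  adjoint_comp_self n := by simpa using h n n n.2 n.2
  adjoint_comp_of_ne {m n} hmn := by simpa [hmn] using h m n m.2 n.2

theorem isCyclicVector_pnat {s : ℕ → H →L[𝕜] H}
    (h : ∀ K : Submodule 𝕜 H, IsClosed (K : Set H) → Ω ∈ K → (∀ n, 1 ≤ n → ∀ v ∈ K, s n v ∈ K) →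
      (∀ n, 1 ≤ n → ∀ v ∈ K, (s n).adjoint v ∈ K) → K = ⊤) :
    IsCyclicVector (fun n : ℕ+ ↦ s n) Ω :=
  fun K hK hΩ hs hadj ↦ h K hK hΩ (fun n hn ↦ hs ⟨n, hn⟩) fun n hn ↦ hadj ⟨n, hn⟩

theorem P_infty_12_unique_up_to_unitary_equivalence_general
    (hs : IsCuntzFamily s) (hs' : IsCuntzFamily s') (hJ : IsNonperiodic J)
    (hcyc : IsCyclicVector s Ω) (hcyc' : IsCyclicVector s' Ω')
    (hΩ : wordOp s J Ω = Ω) (hΩ' : wordOp s' J Ω' = Ω') (hnorm : ‖Ω‖ = ‖Ω'‖) :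
    ∃ U : H ≃ₗᵢ[𝕜] H', U Ω = Ω' ∧ ∀ i v, U (s i v) = s' i (U v) := by
  have hdense := hs.dense_wordSpan hcyc hJ.ne_nil hΩ
  obtain ⟨U, hU⟩ := exists_linearIsometryEquiv_of_inner_eq
    (hs.inner_wordOp_wordOp_eq hs' (hs.inner_wordOp_eq_of_fixed hs' hJ hΩ hΩ' hnorm))
    hdense (hs'.dense_wordSpan hcyc' hJ.ne_nil hΩ')
  exact ⟨U, hU [], intertwines_of_map_wordOp (U : H →L[𝕜] H') hdense hU⟩

end Cuntz

theorem P_infty_12_unique_up_to_unitary_equivalence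
    {H : Type*} [NormedAddCommGroup H] [InnerProductSpace ℂ H] [CompleteSpace H]
    {H' : Type*} [NormedAddCommGroup H'] [InnerProductSpace ℂ H'] [CompleteSpace H']

    (s : ℕ → H →L[ℂ] H) (s' : ℕ → H' →L[ℂ] H')
    (hCuntz : ∀ m n, 1 ≤ m → 1 ≤ n →
      (ContinuousLinearMap.adjoint (s m)).comp (s n) =
        if m = n then (1 : H →L[ℂ] H) else 0)
    (hCuntz' : ∀ m n, 1 ≤ m → 1 ≤ n →
      (ContinuousLinearMap.adjoint (s' m)).comp (s' n) =
        if m = n then (1 : H' →L[ℂ] H') else 0)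
    (Ω : H) (hΩnorm : ‖Ω‖ = 1)
    (Ω' : H') (hΩ'norm : ‖Ω'‖ = 1)
    (hcyc : ∀ K : Submodule ℂ H, IsClosed (K : Set H) → Ω ∈ K →
      (∀ n, 1 ≤ n → ∀ v ∈ K, s n v ∈ K) →
      (∀ n, 1 ≤ n → ∀ v ∈ K, ContinuousLinearMap.adjoint (s n) v ∈ K) → K = ⊤)
    (hcyc' : ∀ K : Submodule ℂ H', IsClosed (K : Set H') → Ω' ∈ K →
      (∀ n, 1 ≤ n → ∀ v ∈ K, s' n v ∈ K) →
      (∀ n, 1 ≤ n → ∀ v ∈ K, ContinuousLinearMap.adjoint (s' n) v ∈ K) → K = ⊤)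
    (hfix : s 1 (s 2 Ω) = Ω) (hfix' : s' 1 (s' 2 Ω') = Ω') :
    ∃ U : H ≃ₗᵢ[ℂ] H', U Ω = Ω' ∧ ∀ n, 1 ≤ n → ∀ v : H, U (s n v) = s' n (U v) := by
  obtain ⟨U, hUΩ, hU⟩ := P_infty_12_unique_up_to_unitary_equivalence_general
    (s := fun n : ℕ+ ↦ s n) (s' := fun n : ℕ+ ↦ s' n)
    (isCuntzFamily_pnat hCuntz) (isCuntzFamily_pnat hCuntz')
    (isNonperiodic_pair (i := (1 : ℕ+)) (j := 2) (by decide))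
    (isCyclicVector_pnat hcyc) (isCyclicVector_pnat hcyc')
    (by simpa using hfix) (by simpa using hfix') (hΩnorm.trans hΩ'norm.symm)
  exact ⟨U, hUΩ, fun n hn ↦ hU ⟨n, hn⟩⟩
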